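/- arXiv:math/9911137 — 2 statements merged into one kernel-verified Lean document; each statement's English description precedes it below -/
import Mathlib

section
/- For a two-sided coherent ring R the following are equivalent: (1) R is weakly quasi-Frobenius; (2) both the left module _RR and the right module R_R are FP-injective; (3) _RR and R_R are FP-cogenerators (on their respective sides); (4) the right module R_R is an FP-injective FP-cogenerator; (5) every finitely presented left R-module and every finitely presented right R-module is reflexive; (6) every cyclic finitely presented left R-module and every cyclic finitely presented right R-module is reflexive; (7) every cyclic finitely presented left R-module and every cyclic finitely presented right R-module embeds in a free module; (8) for every finitely generated left ideal I and every finitely generated right ideal J of R one has l(r(I)) = I and r(l(J)) = J. -/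
/-!
Common definitions: rings are associative with identity, not necessarily commutative.
Left `R`-modules are `Module R M`; right `R`-modules are `Module Rᵐᵒᵖ M`.
-/

universe u

open MulOpposite Function Pointwise

section Defs

variable (R : Type u) [Ring R]

/-- Defining relations of the tensor product `K ⊗_R M` of a right `R`-module `K`
and a left `R`-module `M`, inside the free abelian group on `K × M`. -/
def TensorRels (K M : Type u) [AddCommGroup K] [Module Rᵐᵒᵖ K]
    [AddCommGroup M] [Module R M] : AddSubgroup (FreeAbelianGroup (K × M)) :=
  AddSubgroup.closure
    ({x | ∃ k₁ k₂ m, x = FreeAbelianGroup.of (k₁ + k₂, m) - FreeAbelianGroup.of (k₁, m) -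
        FreeAbelianGroup.of (k₂, m)} ∪
     {x | ∃ k m₁ m₂, x = FreeAbelianGroup.of (k, m₁ + m₂) - FreeAbelianGroup.of (k, m₁) -
        FreeAbelianGroup.of (k, m₂)} ∪
     {x | ∃ (r : R) (k : K) (m : M),
        x = FreeAbelianGroup.of (op r • k, m) - FreeAbelianGroup.of (k, r • m)})

/-- The tensor product `K ⊗_R M` of a right `R`-module `K` and a left `R`-module `M`
over the (not necessarily commutative) ring `R`, as an abelian group. -/
def NCTensor (K M : Type u) [AddCommGroup K] [Module Rᵐᵒᵖ K]
    [AddCommGroup M] [Module R M] : Type u :=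
  FreeAbelianGroup (K × M) ⧸ TensorRels R K M

instance (K M : Type u) [AddCommGroup K] [Module Rᵐᵒᵖ K] [AddCommGroup M] [Module R M] :
    AddCommGroup (NCTensor R K M) :=
  QuotientAddGroup.Quotient.addCommGroup _

/-- The map `μ ⊗ ν : K ⊗_R M → K' ⊗_R M'` induced by a map `μ` of right `R`-modules
and a map `ν` of left `R`-modules. -/
def tensorCongr {K K' M M' : Type u} [AddCommGroup K] [Module Rᵐᵒᵖ K]
    [AddCommGroup K'] [Module Rᵐᵒᵖ K'] [AddCommGroup M] [Module R M]
    [AddCommGroup M'] [Module R M'] (μ : K →ₗ[Rᵐᵒᵖ] K') (ν : M →ₗ[R] M') :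
    NCTensor R K M →+ NCTensor R K' M' :=
  QuotientAddGroup.map (TensorRels R K M) (TensorRels R K' M')
    (FreeAbelianGroup.lift fun p : K × M => FreeAbelianGroup.of (μ p.1, ν p.2))
    (by
      refine (AddSubgroup.closure_le _).2 ?_
      rintro x ((⟨k₁, k₂, m, rfl⟩ | ⟨k, m₁, m₂, rfl⟩) | ⟨r, k, m, rfl⟩) <;>
        refine AddSubgroup.mem_comap.2 (AddSubgroup.subset_closure ?_)
      · exact Or.inl <| Or.inl ⟨μ k₁, μ k₂, ν m, by simp [map_add]⟩
      · exact Or.inl <| Or.inr ⟨μ k, ν m₁, ν m₂, by simp [map_add]⟩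
      · exact Or.inr ⟨r, μ k, ν m, by simp [map_smul]⟩)

/-- A left `R`-module `M` is flat if `μ ⊗ M` is injective for every injective
homomorphism `μ` of right `R`-modules. -/
def ModFlat (M : Type u) [AddCommGroup M] [Module R M] : Prop :=
  ∀ (K L : Type u) [AddCommGroup K] [Module Rᵐᵒᵖ K] [AddCommGroup L] [Module Rᵐᵒᵖ L]
    (μ : K →ₗ[Rᵐᵒᵖ] L), Injective μ →
      Injective (tensorCongr R μ (LinearMap.id : M →ₗ[R] M))

/-- A right `R`-module `M` is flat if `M ⊗ μ` is injective for every injective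
homomorphism `μ` of left `R`-modules. -/
def ModFlatRight (M : Type u) [AddCommGroup M] [Module Rᵐᵒᵖ M] : Prop :=
  ∀ (K L : Type u) [AddCommGroup K] [Module R K] [AddCommGroup L] [Module R L]
    (μ : K →ₗ[R] L), Injective μ →
      Injective (tensorCongr R (LinearMap.id : M →ₗ[Rᵐᵒᵖ] M) μ)

/-- A left `R`-module `M` is fp-flat if `μ ⊗ M` is injective for every injective
homomorphism `μ` of finitely presented right `R`-modules. -/
def FpFlat (M : Type u) [AddCommGroup M] [Module R M] : Prop :=
  ∀ (K L : Type u) [AddCommGroup K] [Module Rᵐᵒᵖ K] [AddCommGroup L] [Module Rᵐᵒᵖ L],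
    Module.FinitePresentation Rᵐᵒᵖ K → Module.FinitePresentation Rᵐᵒᵖ L →
    ∀ (μ : K →ₗ[Rᵐᵒᵖ] L), Injective μ →
      Injective (tensorCongr R μ (LinearMap.id : M →ₗ[R] M))

/-- A right `R`-module `M` is fp-flat if `M ⊗ μ` is injective for every injective
homomorphism `μ` of finitely presented left `R`-modules. -/
def FpFlatRight (M : Type u) [AddCommGroup M] [Module Rᵐᵒᵖ M] : Prop :=
  ∀ (K L : Type u) [AddCommGroup K] [Module R K] [AddCommGroup L] [Module R L],
    Module.FinitePresentation R K → Module.FinitePresentation R L →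
    ∀ (μ : K →ₗ[R] L), Injective μ →
      Injective (tensorCongr R (LinearMap.id : M →ₗ[Rᵐᵒᵖ] M) μ)

/-- `Ext¹_R(F, M) = 0`. -/
def ExtVanish (F M : Type u) [AddCommGroup F] [Module R F] [AddCommGroup M] [Module R M] :
    Prop :=
  Subsingleton
    (((Ext ℤ (ModuleCat.{u} R) 1).obj (Opposite.op (ModuleCat.of R F))).obj (ModuleCat.of R M))

/-- A left `R`-module `M` is FP-injective (absolutely pure) if `Ext¹_R(F, M) = 0` for
every finitely presented left `R`-module `F`. -/
def FPInjective (M : Type u) [AddCommGroup M] [Module R M] : Prop :=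
  ∀ (F : Type u) [AddCommGroup F] [Module R F], Module.FinitePresentation R F → ExtVanish R F M

/-- A left `R`-module `M` is fp-injective if for every injective homomorphism `μ : K → L`
of finitely presented left `R`-modules, the induced map `Hom(L, M) → Hom(K, M)` is
surjective. -/
def FpInjective (M : Type u) [AddCommGroup M] [Module R M] : Prop :=
  ∀ (K L : Type u) [AddCommGroup K] [Module R K] [AddCommGroup L] [Module R L],
    Module.FinitePresentation R K → Module.FinitePresentation R L →
    ∀ (μ : K →ₗ[R] L), Injective μ → ∀ f : K →ₗ[R] M, ∃ g : L →ₗ[R] M, g ∘ₗ μ = f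

/-- A left `R`-module `K` is an FP-cogenerator if for every nonzero homomorphism
`f : M → N` from a finitely generated module `M` to a finitely presented module `N`
there is `g : N → K` with `g ∘ f ≠ 0`. -/
def IsFPCogenerator (K : Type u) [AddCommGroup K] [Module R K] : Prop :=
  ∀ (M N : Type u) [AddCommGroup M] [Module R M] [AddCommGroup N] [Module R N],
    Module.Finite R M → Module.FinitePresentation R N →
    ∀ f : M →ₗ[R] N, f ≠ 0 → ∃ g : N →ₗ[R] K, g ∘ₗ f ≠ 0

/-- A left `R`-module `K` is a cogenerator if for every nonzero homomorphism `f : M → N`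
of left `R`-modules there is `g : N → K` with `g ∘ f ≠ 0`. -/
def IsCogenerator (K : Type u) [AddCommGroup K] [Module R K] : Prop :=
  ∀ (M N : Type u) [AddCommGroup M] [Module R M] [AddCommGroup N] [Module R N],
    ∀ f : M →ₗ[R] N, f ≠ 0 → ∃ g : N →ₗ[R] K, g ∘ₗ f ≠ 0

/-- The canonical evaluation map `M → M** = Hom(Hom(M, R), R)` for a left `R`-module `M`;
here `M* = Hom_R(M, R)` is a right `R`-module. -/
def dualEval (M : Type u) [AddCommGroup M] [Module R M] :
    M →ₗ[R] ((M →ₗ[R] R) →ₗ[Rᵐᵒᵖ] R) where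
  toFun m :=
    { toFun := fun f => f m
      map_add' := fun f g => rfl
      map_smul' := fun r f => rfl }
  map_add' m m' := LinearMap.ext fun f => f.map_add m m'
  map_smul' r m := LinearMap.ext fun f => by simp [f.map_smul]

/-- The canonical evaluation map `M → M** = Hom(Hom(M, R), R)` for a right `R`-module `M`;
here `M* = Hom_R(M, R)` is a left `R`-module. -/
def dualEvalRight (M : Type u) [AddCommGroup M] [Module Rᵐᵒᵖ M] :
    M →ₗ[Rᵐᵒᵖ] ((M →ₗ[Rᵐᵒᵖ] R) →ₗ[R] R) where
  toFun m :=
    { toFun := fun f => f m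
      map_add' := fun f g => rfl
      map_smul' := fun r f => rfl }
  map_add' m m' := LinearMap.ext fun f => f.map_add m m'
  map_smul' r m := LinearMap.ext fun f => by simp [f.map_smul]

/-- The left annihilator of a subset `X ⊆ R`. -/
def lAnn (X : Set R) : Set R := {a | ∀ x ∈ X, a * x = 0}

/-- The right annihilator of a subset `X ⊆ R`. -/
def rAnn (X : Set R) : Set R := {a | ∀ x ∈ X, x * a = 0}

/-- `R` is left coherent: every finitely generated left ideal is finitely presented. -/
def LeftCoherent : Prop :=
  ∀ I : Submodule R R, I.FG → Module.FinitePresentation R I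

/-- `R` is right coherent: every finitely generated right ideal is finitely presented. -/
def RightCoherent : Prop :=
  ∀ I : Submodule Rᵐᵒᵖ R, I.FG → Module.FinitePresentation Rᵐᵒᵖ I

/-- A left `R`-module `M` embeds in a free left `R`-module. -/
def EmbedsInFree (M : Type u) [AddCommGroup M] [Module R M] : Prop :=
  ∃ (ι : Type u) (f : M →ₗ[R] (ι →₀ R)), Injective f

/-- A right `R`-module `M` embeds in a free right `R`-module. -/
def EmbedsInFreeRight (M : Type u) [AddCommGroup M] [Module Rᵐᵒᵖ M] : Prop :=
  ∃ (ι : Type u) (f : M →ₗ[Rᵐᵒᵖ] (ι →₀ R)), Injective f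

/-- `R` is a left IF-ring: every finitely presented left `R`-module embeds in a free module. -/
def LeftIF : Prop :=
  ∀ (M : Type u) [AddCommGroup M] [Module R M],
    Module.FinitePresentation R M → EmbedsInFree R M

/-- `R` is a right IF-ring: every finitely presented right `R`-module embeds in a free module. -/
def RightIF : Prop :=
  ∀ (M : Type u) [AddCommGroup M] [Module Rᵐᵒᵖ M],
    Module.FinitePresentation Rᵐᵒᵖ M → EmbedsInFreeRight R M

/-- A module is cyclic if it is generated by one element. -/
def CyclicModule (M : Type u) [AddCommGroup M] [Module R M] : Prop :=
  ∃ m : M, Submodule.span R {m} = ⊤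

/-- `R` is a left CF-ring: every cyclic left `R`-module embeds in a free module. -/
def LeftCF : Prop :=
  ∀ (M : Type u) [AddCommGroup M] [Module R M], CyclicModule R M → EmbedsInFree R M

/-- `R` is a left FGF-ring: every finitely generated left `R`-module embeds in a free module. -/
def LeftFGF : Prop :=
  ∀ (M : Type u) [AddCommGroup M] [Module R M], Module.Finite R M → EmbedsInFree R M

/-- `R` is a left Kasch ring: `Hom_R(M, R) ≠ 0` for every nonzero cyclic left `R`-module. -/
def LeftKasch : Prop :=
  ∀ (M : Type u) [AddCommGroup M] [Module R M],
    CyclicModule R M → Nontrivial M → ∃ f : M →ₗ[R] R, f ≠ 0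

/-- `R` is a right Kasch ring: `Hom_R(M, R) ≠ 0` for every nonzero cyclic right `R`-module. -/
def RightKasch : Prop :=
  ∀ (M : Type u) [AddCommGroup M] [Module Rᵐᵒᵖ M],
    CyclicModule Rᵐᵒᵖ M → Nontrivial M → ∃ f : M →ₗ[Rᵐᵒᵖ] R, f ≠ 0

/-- The socle of a module: the sum of all its simple submodules. -/
def socle (M : Type u) [AddCommGroup M] [Module R M] : Submodule R M :=
  sSup {N : Submodule R M | IsSimpleModule R N}

/-- `R` is left semiartinian: every nonzero cyclic left `R`-module has a nonzero socle. -/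
def LeftSemiartinian : Prop :=
  ∀ (M : Type u) [AddCommGroup M] [Module R M],
    CyclicModule R M → Nontrivial M → socle R M ≠ ⊥

/-- A submodule `N ⊆ M` is essential if it meets every nonzero submodule nontrivially. -/
def EssentialSub {M : Type u} [AddCommGroup M] [Module R M] (N : Submodule R M) : Prop :=
  ∀ P : Submodule R M, P ≠ ⊥ → N ⊓ P ≠ ⊥

/-- `R` is semiregular: `R/rad R` is von Neumann regular,
where `rad R` is the Jacobson radical. -/
def Semiregular : Prop :=
  ∀ a : R, ∃ x : R, a - a * x * a ∈ Ideal.jacobson (⊥ : Ideal R)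

/-- `R` is semiperfect: `R/rad R` is semisimple and idempotents lift modulo `rad R`. -/
def Semiperfect : Prop :=
  IsSemisimpleModule R (R ⧸ Ideal.jacobson (⊥ : Ideal R)) ∧
    ∀ a : R, a * a - a ∈ Ideal.jacobson (⊥ : Ideal R) →
      ∃ e : R, e * e = e ∧ e - a ∈ Ideal.jacobson (⊥ : Ideal R)

/-- A module is indecomposable if it is nonzero and is not the direct sum of two
nonzero submodules. -/
def IndecModule (M : Type u) [AddCommGroup M] [Module R M] : Prop :=
  Nontrivial M ∧ ∀ A B : Submodule R M, IsCompl A B → A = ⊥ ∨ B = ⊥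

/-- `R` is weakly quasi-Frobenius: left and right coherent and left and right FP-injective. -/
def WQF : Prop :=
  LeftCoherent R ∧ RightCoherent R ∧ FPInjective R R ∧ FPInjective Rᵐᵒᵖ R

/-- `R` is quasi-Frobenius: left and right noetherian and left and right self-injective. -/
def QF : Prop :=
  IsNoetherianRing R ∧ IsNoetherian Rᵐᵒᵖ R ∧ Module.Injective R R ∧ Module.Injective Rᵐᵒᵖ R

end Defs

/-- A group is locally finite if every finitely generated subgroup is finite. -/
def LocallyFiniteGroup (G : Type*) [Group G] : Prop :=
  ∀ H : Subgroup G, H.FG → Finite H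

/-!
Let `U` be an `(A, B)`-bimodule. If `A` acts on `U` as `End_B U` and `U` is finitely presented and
FP-injective over `B`, then dualizing a presentation `A^m → A^n → M → 0` and extending
`B`-homomorphisms into `U` shows that `M` is `U`-torsionless, and even `U`-reflexive when `U` is
coherent over `B`. Conversely, torsionless cyclic modules make every finitely generated submodule
of `U` a double annihilator; by coherence, annihilators of intersections are then sums of
annihilators, so a homomorphism into `U` can be glued generator by generator (Ikeda–Nakayama) and
`U` is FP-injective. The theorem is the case `A = R`, `B = Rᵐᵒᵖ`, `U = R`, together with
its mirror image `A = Rᵐᵒᵖ`, `B = R`.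
-/

section Factorization

variable {A B L M N U : Type*} [Ring A] [Ring B] [AddCommGroup L] [Module A L] [AddCommGroup M]
  [Module A M] [AddCommGroup N] [Module A N] [AddCommGroup U] [Module A U] [Module B U]

theorem exists_comp_eq_of_ker_le_ker {p : M →ₗ[A] N} (hp : Surjective p) (f : M →ₗ[A] U)
    (hf : LinearMap.ker p ≤ LinearMap.ker f) : ∃ g : N →ₗ[A] U, g ∘ₗ p = f := by
  refine ⟨(LinearMap.ker p).liftQ f hf ∘ₗ (p.quotKerEquivOfSurjective hp).symm, ?_⟩
  ext x
  simp

theorem exact_lcomp [SMulCommClass A B U] {q : L →ₗ[A] M} {p : M →ₗ[A] N} (hqp : Exact q p)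
    (hp : Surjective p) : Exact (LinearMap.lcomp B U p) (LinearMap.lcomp B U q) := fun f =>
  ⟨fun hf => exists_comp_eq_of_ker_le_ker hp f
      (hqp.linearMap_ker_eq.trans_le (LinearMap.range_le_ker_iff.2 hf)), by
    rintro ⟨g, rfl⟩
    exact LinearMap.ext fun x => by simp [hqp.apply_apply_eq_zero]⟩

theorem injective_fst_comp_restrict_ker_snd_comp {i : L →ₗ[A] M × N} (hi : Injective i) :
    Injective (LinearMap.fst A M N ∘ₗ i ∘ₗ
      (LinearMap.ker (LinearMap.snd A M N ∘ₗ i)).subtype) := fun x y hxy =>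
  Subtype.ext <| hi <| Prod.ext hxy <|
    (LinearMap.mem_ker.1 x.2).trans (LinearMap.mem_ker.1 y.2).symm

end Factorization

section Extension

/-- Every homomorphism `K → U` extends from the submodule `K` to the whole module. -/
def HasHomExtension {A N : Type*} [Ring A] [AddCommGroup N] [Module A N] (K : Submodule A N)
    (U : Type*) [AddCommGroup U] [Module A U] : Prop :=
  ∀ f : K →ₗ[A] U, ∃ g : N →ₗ[A] U, g ∘ₗ K.subtype = f

section

variable {A M N F U : Type*} [Ring A] [AddCommGroup M] [Module A M] [AddCommGroup N] [Module A N]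
  [AddCommGroup F] [Module A F] [AddCommGroup U] [Module A U]

theorem HasHomExtension.ker_of_projective [Module.Projective A M] {p : M →ₗ[A] F}
    (hp : Surjective p) (h : HasHomExtension (LinearMap.ker p) U) {π : N →ₗ[A] F}
    (hπ : Surjective π) : HasHomExtension (LinearMap.ker π) U := by
  intro f
  obtain ⟨φ, rfl⟩ := Module.projective_lifting_property π p hπ
  obtain ⟨g, hg⟩ := h (f ∘ₗ φ.restrict fun _ hx => hx)
  -- `N` is the pushout of `ker π` and `M` along `ker p`, so `f` and `g` glue.
  let s := LinearMap.coprod (LinearMap.ker π).subtype φ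
  have hs : Surjective s := fun n => by
    obtain ⟨x, hx⟩ := hp (π n)
    exact ⟨(⟨n - φ x, by simpa [sub_eq_zero] using hx.symm⟩, x), by simp [s]⟩
  have hker : LinearMap.ker s ≤ LinearMap.ker (LinearMap.coprod f g) := by
    rintro ⟨k, x⟩ hkx
    have hkx' : (k : N) + φ x = 0 := by simpa [s] using hkx
    have hx : π (φ x) = 0 := by
      rw [← neg_eq_of_add_eq_zero_right hkx', map_neg, LinearMap.mem_ker.1 k.2, neg_zero]
    have hgx : g x = f ⟨φ x, hx⟩ := LinearMap.congr_fun hg ⟨x, hx⟩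
    have hk : k + ⟨φ x, hx⟩ = 0 := Subtype.ext hkx'
    rw [LinearMap.mem_ker, LinearMap.coprod_apply, hgx, ← map_add, hk, map_zero]
  obtain ⟨l, hl⟩ := exists_comp_eq_of_ker_le_ker hs _ hker
  refine ⟨l, LinearMap.ext fun k => ?_⟩
  simpa [s] using LinearMap.congr_fun hl (k, 0)

theorem hasHomExtension_range_iff {d : M →ₗ[A] N} :
    HasHomExtension (LinearMap.range d) U ↔
      ∀ f : M →ₗ[A] U, LinearMap.ker d ≤ LinearMap.ker f → ∃ g : N →ₗ[A] U, g ∘ₗ d = f := by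
  have hsurj := d.surjective_rangeRestrict
  have hker := d.ker_rangeRestrict
  constructor
  · intro h f hf
    obtain ⟨f', rfl⟩ := exists_comp_eq_of_ker_le_ker hsurj f (hker.trans_le hf)
    obtain ⟨g, rfl⟩ := h f'
    exact ⟨g, rfl⟩
  · intro h f
    obtain ⟨g, hg⟩ := h (f ∘ₗ d.rangeRestrict) (hker.symm.trans_le (LinearMap.ker_le_ker_comp _ _))
    exact ⟨g, (LinearMap.cancel_right hsurj).1 hg⟩

end

section Ext

open CategoryTheory

variable {A F U Q N : Type u} [Ring A] [AddCommGroup F] [Module A F] [AddCommGroup U] [Module A U]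
  [AddCommGroup Q] [Module A Q] [AddCommGroup N] [Module A N]

theorem extVanish_iff_of_projectiveResolution (P : ProjectiveResolution (ModuleCat.of A F)) :
    ExtVanish A F U ↔ ∀ f : P.complex.X 1 ⟶ ModuleCat.of A U, P.complex.d 2 1 ≫ f = 0 →
      ∃ g : P.complex.X 0 ⟶ ModuleCat.of A U, P.complex.d 1 0 ≫ g = f := by
  unfold ExtVanish
  rw [← ModuleCat.isZero_iff_subsingleton, (P.isoExt (R := ℤ) 1 (ModuleCat.of A U)).isZero_iff,
    ← HomologicalComplex.exactAt_iff_isZero_homology,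
    HomologicalComplex.exactAt_iff' _ 0 1 2 (by simp) (by simp),
    ShortComplex.moduleCat_exact_iff]
  rfl

theorem extVanish_iff_hasHomExtension_ker [Module.Projective A Q] {p : Q →ₗ[A] F}
    (hp : Surjective p) : ExtVanish A F U ↔ HasHomExtension (LinearMap.ker p) U := by
  let P := projectiveResolution (ModuleCat.of A F)
  let π : P.complex.X 0 ⟶ ModuleCat.of A F := P.π.f 0
  have hπ : Surjective π.hom :=
    (ModuleCat.epi_iff_surjective π).1 (inferInstanceAs (Epi (P.π.f 0)))
  have : Module.Projective A (P.complex.X 0) := (IsProjective.iff_projective _).2 (P.projective 0)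
  have hexact₁ : Exact (P.complex.d 2 1).hom (P.complex.d 1 0).hom :=
    (ShortComplex.ShortExact.moduleCat_exact_iff_function_exact _).1 (P.exact_succ 0)
  have hexact₀ : Exact (P.complex.d 1 0).hom π.hom :=
    (ShortComplex.ShortExact.moduleCat_exact_iff_function_exact _).1
      (ShortComplex.exact_of_g_is_cokernel (.mk _ _ P.complex_d_comp_π_f_zero)
        P.isColimitCokernelCofork)
  calc ExtVanish A F U
    _ ↔ ∀ f : P.complex.X 1 →ₗ[A] U, f ∘ₗ (P.complex.d 2 1).hom = 0 →
          ∃ g : P.complex.X 0 →ₗ[A] U, g ∘ₗ (P.complex.d 1 0).hom = f := by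
      rw [extVanish_iff_of_projectiveResolution P]
      simp only [ModuleCat.hom_ext_iff, ModuleCat.hom_comp, ModuleCat.hom_zero]
      exact ModuleCat.homEquiv.forall_congr fun _ => imp_congr Iff.rfl <|
        ModuleCat.homEquiv.exists_congr fun _ => Iff.rfl
    _ ↔ HasHomExtension (LinearMap.ker π.hom) U := by
      simp only [LinearMap.exact_iff.1 hexact₀, hasHomExtension_range_iff,
        LinearMap.exact_iff.1 hexact₁, LinearMap.range_le_ker_iff]
    _ ↔ HasHomExtension (LinearMap.ker p) U :=
      ⟨fun h => h.ker_of_projective hπ hp, fun h => h.ker_of_projective hp hπ⟩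

theorem FPInjective.hasHomExtension (h : FPInjective A U) (K : Submodule A N)
    [hK : Module.FinitePresentation A (N ⧸ K)] : HasHomExtension K U := by
  obtain ⟨n, -, p, -, hp, -⟩ := Module.FinitePresentation.exists_fin' A (N ⧸ K)
  have := ((extVanish_iff_hasHomExtension_ker hp).1 (h _ hK)).ker_of_projective hp K.mkQ_surjective
  rwa [K.ker_mkQ] at this

end Ext

end Extension

section Coherence

/-- Pseudo-coherence in the sense of Bourbaki: every finitely generated submodule is finitely
presented. Left (right) coherence of `R` is pseudo-coherence of `R` over `R` (over `Rᵐᵒᵖ`). -/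
def IsPseudoCoherent (A N : Type*) [Ring A] [AddCommGroup N] [Module A N] : Prop :=
  ∀ K : Submodule A N, K.FG → Module.FinitePresentation A K

variable {A K M N : Type*} [Ring A] [AddCommGroup K] [Module A K] [AddCommGroup M] [Module A M]
  [AddCommGroup N] [Module A N]

theorem finitePresentation_quotient [Module.FinitePresentation A N] {K : Submodule A N}
    (hK : K.FG) : Module.FinitePresentation A (N ⧸ K) :=
  Module.finitePresentation_of_surjective K.mkQ K.mkQ_surjective (K.ker_mkQ.symm ▸ hK)

namespace IsPseudoCoherent

theorem finitePresentation_of_injective [Module.Finite A K] (hN : IsPseudoCoherent A N)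
    {i : K →ₗ[A] N} (hi : Injective i) : Module.FinitePresentation A K :=
  have := hN (LinearMap.range i) (Module.Finite.iff_fg.1 inferInstance)
  .of_equiv (LinearEquiv.ofInjective i hi).symm

theorem of_injective (hN : IsPseudoCoherent A N) {j : M →ₗ[A] N} (hj : Injective j) :
    IsPseudoCoherent A M := fun K hK =>
  have := Module.Finite.iff_fg.2 hK
  hN.finitePresentation_of_injective (i := j ∘ₗ K.subtype) (hj.comp K.injective_subtype)

theorem fg_ker [Module.Finite A M] (hN : IsPseudoCoherent A N) (f : M →ₗ[A] N) :
    (LinearMap.ker f).FG := by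
  have := hN (LinearMap.range f) (Module.Finite.iff_fg.1 inferInstance)
  simpa only [LinearMap.ker_rangeRestrict] using
    Module.FinitePresentation.fg_ker f.rangeRestrict f.surjective_rangeRestrict

theorem prod (hM : IsPseudoCoherent A M) (hN : IsPseudoCoherent A N) :
    IsPseudoCoherent A (M × N) := by
  intro K hK
  have := Module.Finite.iff_fg.2 hK
  let c := LinearMap.snd A M N ∘ₗ K.subtype
  have := Module.Finite.iff_fg.2 (hN.fg_ker c)
  have : Module.FinitePresentation A (LinearMap.ker c.rangeRestrict) := by
    rw [LinearMap.ker_rangeRestrict]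
    exact hM.finitePresentation_of_injective
      (injective_fst_comp_restrict_ker_snd_comp K.injective_subtype)
  have := hN (LinearMap.range c) (Module.Finite.iff_fg.1 inferInstance)
  exact Module.finitePresentation_of_ker c.rangeRestrict c.surjective_rangeRestrict

theorem pi {ι : Type*} [Finite ι] (hN : IsPseudoCoherent A N) : IsPseudoCoherent A (ι → N) := by
  induction ι using Finite.induction_empty_option with
  | of_equiv e h => exact h.of_injective (LinearEquiv.funCongrLeft A N e).injective
  | h_empty => exact fun K _ => inferInstance
  | h_option h => exact (hN.prod h).of_injective (LinearEquiv.piOptionEquivProd A).injective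

end IsPseudoCoherent

/-- Homomorphisms to `U` extend to `N` from every finitely generated submodule of `N`. -/
def HasFGHomExtensions (A N U : Type*) [Ring A] [AddCommGroup N] [Module A N] [AddCommGroup U]
    [Module A U] : Prop :=
  ∀ K : Submodule A N, K.FG → HasHomExtension K U

variable {U : Type*} [AddCommGroup U] [Module A U]

namespace HasFGHomExtensions

theorem exists_comp_eq [Module.Finite A M] (h : HasFGHomExtensions A N U) (i : M →ₗ[A] N)
    (f : M →ₗ[A] U) (hf : LinearMap.ker i ≤ LinearMap.ker f) : ∃ g : N →ₗ[A] U, g ∘ₗ i = f :=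
  hasHomExtension_range_iff.1 (h _ (Module.Finite.iff_fg.1 inferInstance)) f hf

theorem of_injective (h : HasFGHomExtensions A N U) {j : M →ₗ[A] N} (hj : Injective j) :
    HasFGHomExtensions A M U := fun K hK f => by
  have := Module.Finite.iff_fg.2 hK
  have hinj : Injective (j ∘ₗ K.subtype) := hj.comp K.injective_subtype
  obtain ⟨g, rfl⟩ := h.exists_comp_eq _ f ((LinearMap.ker_eq_bot.2 hinj).trans_le bot_le)
  exact ⟨g ∘ₗ j, rfl⟩

theorem prod (hN : IsPseudoCoherent A N) (h₁ : HasFGHomExtensions A M U)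
    (h₂ : HasFGHomExtensions A N U) : HasFGHomExtensions A (M × N) U := by
  intro K hK f
  have := Module.Finite.iff_fg.2 hK
  let c := LinearMap.snd A M N ∘ₗ K.subtype
  have := Module.Finite.iff_fg.2 (hN.fg_ker c)
  let d := LinearMap.fst A M N ∘ₗ K.subtype ∘ₗ (LinearMap.ker c).subtype
  have hd : Injective d := injective_fst_comp_restrict_ker_snd_comp K.injective_subtype
  obtain ⟨g₁, hg₁⟩ := h₁.exists_comp_eq (M := LinearMap.ker c) d
    (f ∘ₗ (LinearMap.ker c).subtype) ((LinearMap.ker_eq_bot.2 hd).trans_le bot_le)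
  let f₂ := f - g₁ ∘ₗ LinearMap.fst A M N ∘ₗ K.subtype
  have hf₂ : LinearMap.ker c ≤ LinearMap.ker f₂ := fun x hx => by
    have hx' : g₁ (d ⟨x, hx⟩) = f x := LinearMap.congr_fun hg₁ ⟨x, hx⟩
    exact sub_eq_zero.2 hx'.symm
  obtain ⟨g₂, hg₂⟩ := h₂.exists_comp_eq c f₂ hf₂
  refine ⟨g₁.coprod g₂, LinearMap.ext fun k => ?_⟩
  have hk : g₂ (c k) = f k - g₁ (k : M × N).1 := LinearMap.congr_fun hg₂ k
  exact eq_sub_iff_add_eq'.1 hk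

theorem pi {ι : Type*} [Finite ι] (hN : IsPseudoCoherent A N) (h : HasFGHomExtensions A N U) :
    HasFGHomExtensions A (ι → N) U := by
  induction ι using Finite.induction_empty_option with
  | of_equiv e h' => exact h'.of_injective (LinearEquiv.funCongrLeft A N e).injective
  | h_empty => exact fun K _ f => ⟨0, Subsingleton.elim _ _⟩
  | h_option h' =>
    exact (h.prod hN.pi h').of_injective (LinearEquiv.piOptionEquivProd A).injective

end HasFGHomExtensions

end Coherence

theorem FPInjective.of_hasFGHomExtensions {A U : Type u} [Ring A] [AddCommGroup U] [Module A U]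
    (hA : IsPseudoCoherent A A) (h : HasFGHomExtensions A A U) : FPInjective A U := by
  intro F _ _ hF
  obtain ⟨n, -, p, -, hp, -⟩ := Module.FinitePresentation.exists_fin' A F
  exact (extVanish_iff_hasHomExtension_ker hp).2
    (h.pi hA _ (Module.FinitePresentation.fg_ker p hp))

section Duality

/-- `M` is `U`-torsionless: homomorphisms `M → U` detect nonzero elements. -/
def IsTorsionless (A M U : Type*) [Ring A] [AddCommGroup M] [Module A M] [AddCommGroup U]
    [Module A U] : Prop :=
  ∀ x : M, (∀ g : M →ₗ[A] U, g x = 0) → x = 0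

theorem isFPCogenerator_iff {A U : Type u} [Ring A] [AddCommGroup U] [Module A U] :
    IsFPCogenerator A U ↔ ∀ (M : Type u) [AddCommGroup M] [Module A M],
      Module.FinitePresentation A M → IsTorsionless A M U := by
  constructor
  · intro h M _ _ hM x hx
    by_contra hne
    obtain ⟨g, hg⟩ := h A M inferInstance hM (LinearMap.toSpanSingleton A M x) fun h0 =>
      hne (by simpa using LinearMap.congr_fun h0 1)
    exact hg (LinearMap.ext_ring (by simpa using hx g))
  · intro h M N _ _ _ _ _ hN f hf
    by_contra! hcomp
    exact hf (LinearMap.ext fun x => h N hN (f x) fun g => LinearMap.congr_fun (hcomp g) x)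

section

variable {A B M U ι : Type*} [Ring A] [Ring B] [AddCommGroup M] [Module A M] [AddCommGroup U]
  [Module A U] [Module B U] [SMulCommClass A B U]

namespace IsTorsionless

theorem pi [FaithfulSMul A U] : IsTorsionless A (ι → A) U := fun v hv => funext fun i =>
  eq_of_smul_eq_smul fun x : U => by
    simpa using hv (LinearMap.toSpanSingleton A U x ∘ₗ LinearMap.proj i)

theorem of_injective_finsupp {f : M →ₗ[A] ι →₀ U} (hf : Injective f) : IsTorsionless A M U :=
  fun x hx => hf (Finsupp.ext fun i => by simpa using hx (Finsupp.lapply i ∘ₗ f))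

theorem injective_applyₗ' (h : IsTorsionless A M U) :
    Injective (LinearMap.applyₗ' B : M →+ (M →ₗ[A] U) →ₗ[B] U) :=
  (injective_iff_map_eq_zero _).2 fun x hx => h x (LinearMap.congr_fun hx)

theorem of_injective_applyₗ'
    (h : Injective (LinearMap.applyₗ' B : M →+ (M →ₗ[A] U) →ₗ[B] U)) : IsTorsionless A M U :=
  fun x hx => (injective_iff_map_eq_zero _).1 h x (LinearMap.ext hx)

end IsTorsionless

theorem surjective_applyₗ'_pi [Finite ι]
    (hA : Surjective (Module.toModuleEnd B U : A → Module.End B U)) :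
    Surjective (LinearMap.applyₗ' B : (ι → A) →+ ((ι → A) →ₗ[A] U) →ₗ[B] U) := by
  classical
  have := Fintype.ofFinite ι
  intro ψ
  let e := LinearEquiv.piRing A U ι B
  choose w hw using fun i => hA (ψ ∘ₗ e.symm.toLinearMap ∘ₗ LinearMap.single B (fun _ => U) i)
  refine ⟨w, LinearMap.ext fun k => ?_⟩
  obtain ⟨y, rfl⟩ := e.symm.surjective k
  calc e.symm y w
    _ = ∑ i, w i • y i := LinearEquiv.piRing_symm_apply ..
    _ = ∑ i, ψ (e.symm (Pi.single i (y i))) :=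
      Finset.sum_congr rfl fun i _ => LinearMap.congr_fun (hw i) (y i)
    _ = ψ (e.symm y) := by rw [← map_sum, ← map_sum, Finset.univ_sum_single]

theorem finitePresentation_dual_pi [Finite ι] [Module.FinitePresentation B U] :
    Module.FinitePresentation B ((ι → A) →ₗ[A] U) := by
  classical
  have := Fintype.ofFinite ι
  exact .of_equiv (LinearEquiv.piRing A U ι B).symm

theorem IsPseudoCoherent.dual_pi [Finite ι] (hU : IsPseudoCoherent B U) :
    IsPseudoCoherent B ((ι → A) →ₗ[A] U) := by
  classical
  have := Fintype.ofFinite ι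
  exact hU.pi.of_injective (LinearEquiv.piRing A U ι B).injective

theorem finite_dual [Module.Finite B U] [Module.FinitePresentation A M]
    (hU : IsPseudoCoherent B U) : Module.Finite B (M →ₗ[A] U) := by
  obtain ⟨n, m, p, q, hp, hq⟩ := Module.FinitePresentation.exists_fin' A M
  have : Module.Finite B ((Fin n → A) →ₗ[A] U) := .equiv (LinearEquiv.piRing A U (Fin n) B).symm
  have hker := hU.dual_pi.fg_ker (LinearMap.lcomp B U q)
  rw [(exact_lcomp hq hp).linearMap_ker_eq] at hker
  have := Module.Finite.iff_fg.2 hker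
  exact .equiv (LinearEquiv.ofInjective _ (LinearMap.lcomp_injective_of_surjective p hp)).symm

end

theorem IsTorsionless.exists_injective_finsupp {A M U : Type u} {B : Type*} [Ring A] [Ring B]
    [AddCommGroup M] [Module A M] [AddCommGroup U] [Module A U] [Module B U] [SMulCommClass A B U]
    [Module.Finite B (M →ₗ[A] U)] (h : IsTorsionless A M U) :
    ∃ (ι : Type u) (f : M →ₗ[A] ι →₀ U), Injective f := by
  obtain ⟨S, hS⟩ := Module.Finite.fg_top (R := B) (M := M →ₗ[A] U)
  refine ⟨S, (Finsupp.linearEquivFunOnFinite A U S).symm.toLinearMap ∘ₗ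
    LinearMap.pi (fun g : S => (g : M →ₗ[A] U)), ?_⟩
  rw [LinearMap.coe_comp]
  refine (LinearEquiv.injective _).comp <|
    (injective_iff_map_eq_zero _).2 fun x hx => h x fun g => ?_
  have hspan : Submodule.span B (S : Set (M →ₗ[A] U)) ≤ LinearMap.ker (LinearMap.applyₗ' B x) :=
    Submodule.span_le.2 fun g hg => congrFun hx ⟨g, hg⟩
  exact hspan (hS ▸ Submodule.mem_top (x := g))

section

variable {A B U : Type u} {M : Type*} [Ring A] [Ring B] [AddCommGroup M] [Module A M]
  [AddCommGroup U] [Module A U] [Module B U] [SMulCommClass A B U] [Module.FinitePresentation B U]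
  [Module.FinitePresentation A M]

theorem FPInjective.isTorsionless [FaithfulSMul A U] (hU : FPInjective B U)
    (hA : Surjective (Module.toModuleEnd B U : A → Module.End B U)) : IsTorsionless A M U := by
  intro x hx
  obtain ⟨n, m, p, q, hp, hq⟩ := Module.FinitePresentation.exists_fin' A M
  obtain ⟨v, rfl⟩ := hp x
  have (k : ℕ) := finitePresentation_dual_pi (A := A) (B := B) (U := U) (ι := Fin k)
  let Φ := LinearMap.lcomp B U q
  have hker : LinearMap.ker Φ ≤ LinearMap.ker (LinearMap.applyₗ' B v) := fun k hk => by
    obtain ⟨g, rfl⟩ := (exact_lcomp (B := B) hq hp k).1 hk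
    exact hx g
  have : Module.FinitePresentation B (((Fin m → A) →ₗ[A] U) ⧸ LinearMap.range Φ) :=
    finitePresentation_quotient (Module.Finite.iff_fg.1 inferInstance)
  obtain ⟨ψ, hψ⟩ := hasHomExtension_range_iff.1 (hU.hasHomExtension (LinearMap.range Φ)) _ hker
  obtain ⟨w, rfl⟩ := surjective_applyₗ'_pi hA ψ
  have hvw : q w = v := IsTorsionless.pi.injective_applyₗ' (B := B) hψ
  rw [← hvw, hq.apply_apply_eq_zero]

theorem FPInjective.surjective_applyₗ' (hU : FPInjective B U) (hcoh : IsPseudoCoherent B U)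
    (hA : Surjective (Module.toModuleEnd B U : A → Module.End B U)) :
    Surjective (LinearMap.applyₗ' B : M →+ (M →ₗ[A] U) →ₗ[B] U) := by
  intro ξ
  obtain ⟨n, m, p, q, hp, hq⟩ := Module.FinitePresentation.exists_fin' A M
  have := finitePresentation_dual_pi (A := A) (B := B) (U := U) (ι := Fin n)
  let P := LinearMap.lcomp B U p
  let Φ := LinearMap.lcomp B U q
  have hP : Injective P := LinearMap.lcomp_injective_of_surjective p hp
  have := hcoh.dual_pi (LinearMap.range Φ) (Module.Finite.iff_fg.1 inferInstance)
  have : Module.FinitePresentation B (((Fin n → A) →ₗ[A] U) ⧸ LinearMap.range P) := by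
    rw [← (exact_lcomp hq hp).linearMap_ker_eq]
    exact .of_equiv Φ.quotKerEquivRange.symm
  obtain ⟨ψ, rfl⟩ := hasHomExtension_range_iff.1 (hU.hasHomExtension (LinearMap.range P)) ξ
    ((LinearMap.ker_eq_bot.2 hP).trans_le bot_le)
  obtain ⟨v, rfl⟩ := surjective_applyₗ'_pi hA ψ
  exact ⟨p v, rfl⟩

end

end Duality

section DoubleAnnihilator

/-- The left ideal of all `b : B` that kill `X`. For `U = R` and `B = Rᵐᵒᵖ` this is the right
annihilator `r(X)`, for `B = R` the left annihilator `l(X)`. -/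
def annihilatorIdeal (B : Type*) {U : Type*} [Ring B] [AddCommGroup U] [Module B U] (X : Set U) :
    Ideal B :=
  ⨅ x ∈ X, LinearMap.ker (LinearMap.toSpanSingleton B U x)

/-- Every finitely generated `A`-submodule of `U` is the annihilator in `U` of its annihilator
in `B`. -/
def HasFGDoubleAnnihilators (A B U : Type*) [Ring A] [Ring B] [AddCommGroup U] [Module A U]
    [Module B U] : Prop :=
  ∀ I : Submodule A U, I.FG → ∀ x, (∀ b ∈ annihilatorIdeal B (I : Set U), b • x = 0) → x ∈ I

/-- Every `A`-homomorphism `I → U` is multiplication by an element of `B`. -/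
def HasScalarExtension {A U : Type*} (B : Type*) [Ring A] [Ring B] [AddCommGroup U] [Module A U]
    [Module B U] (I : Submodule A U) : Prop :=
  ∀ f : I →ₗ[A] U, ∃ b : B, ∀ x : I, f x = b • (x : U)

variable {A B U : Type*} [Ring A] [Ring B] [AddCommGroup U] [Module A U] [Module B U]

theorem mem_annihilatorIdeal {X : Set U} {b : B} :
    b ∈ annihilatorIdeal B X ↔ ∀ x ∈ X, b • x = 0 := by
  simp [annihilatorIdeal]

theorem annihilatorIdeal_anti {X Y : Set U} (h : X ⊆ Y) :
    annihilatorIdeal B Y ≤ annihilatorIdeal B X :=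
  biInf_mono h

theorem annihilatorIdeal_span [SMulCommClass B A U] (X : Set U) :
    annihilatorIdeal B (Submodule.span A X : Set U) = annihilatorIdeal B X := by
  refine (annihilatorIdeal_anti Submodule.subset_span).antisymm fun b hb => ?_
  have : Submodule.span A X ≤ LinearMap.ker (DistribSMul.toLinearMap A U b) :=
    Submodule.span_le.2 (mem_annihilatorIdeal.1 hb)
  exact mem_annihilatorIdeal.2 this

theorem annihilatorIdeal_fg [SMulCommClass B A U] (hU : IsPseudoCoherent B U) {I : Submodule A U}
    (hI : I.FG) : (annihilatorIdeal B (I : Set U)).FG := by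
  obtain ⟨n, s, rfl⟩ := Submodule.fg_iff_exists_fin_generating_family.1 hI
  have := hU.pi.fg_ker (LinearMap.pi fun i => LinearMap.toSpanSingleton B U (s i))
  rwa [annihilatorIdeal_span, annihilatorIdeal, iInf_range, ← LinearMap.ker_pi]

theorem annihilatorIdeal_inter [SMulCommClass B A U] (hB : IsPseudoCoherent B U)
    (hAB : HasFGDoubleAnnihilators A B U) (hBA : HasFGDoubleAnnihilators B A U) {e : U}
    (he : Injective fun b : B => b • e) {I I' : Submodule A U} (hI : I.FG) (hI' : I'.FG) :
    annihilatorIdeal B (I ∩ I' : Set U) =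
      annihilatorIdeal B (I : Set U) ⊔ annihilatorIdeal B (I' : Set U) := by
  let t := LinearMap.toSpanSingleton B U e
  let J := annihilatorIdeal B (I : Set U) ⊔ annihilatorIdeal B (I' : Set U)
  have hJ : J.FG := Submodule.FG.sup (annihilatorIdeal_fg hB hI) (annihilatorIdeal_fg hB hI')
  refine le_antisymm (fun b hb => ?_) (sup_le (annihilatorIdeal_anti Set.inter_subset_left)
    (annihilatorIdeal_anti Set.inter_subset_right))
  suffices t b ∈ Submodule.map t J from he.mem_set_image.1 this
  refine hBA _ (Submodule.FG.map t hJ) _ fun a ha => ?_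
  have hmem {L : Submodule A U} (hL : L.FG) (hLJ : annihilatorIdeal B (L : Set U) ≤ J) :
      a • e ∈ L := hAB L hL _ fun c hc => by
    rw [smul_comm]
    exact mem_annihilatorIdeal.1 ha _ ⟨c, hLJ hc, rfl⟩
  calc a • b • e
    _ = b • a • e := (smul_comm b a e).symm
    _ = 0 := mem_annihilatorIdeal.1 hb _ ⟨hmem hI le_sup_left, hmem hI' le_sup_right⟩

namespace HasScalarExtension

theorem span_singleton [SMulCommClass B A U] (hBA : HasFGDoubleAnnihilators B A U) (x : U) :
    HasScalarExtension B (Submodule.span A {x}) := by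
  intro f
  have hx : x ∈ Submodule.span A {x} := Submodule.mem_span_singleton_self x
  have hfx : f ⟨x, hx⟩ ∈ Submodule.span B {x} := by
    refine hBA _ (Submodule.fg_span_singleton x) _ fun a ha => ?_
    have hax : a • (⟨x, hx⟩ : Submodule.span A {x}) = 0 :=
      Subtype.ext (mem_annihilatorIdeal.1 ha x (Submodule.mem_span_singleton_self x))
    rw [← map_smul, hax, map_zero]
  obtain ⟨b, hb⟩ := Submodule.mem_span_singleton.1 hfx
  refine ⟨b, fun ⟨y, hy⟩ => ?_⟩
  obtain ⟨a, rfl⟩ := Submodule.mem_span_singleton.1 hy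
  calc f (a • ⟨x, hx⟩)
    _ = a • b • x := by rw [map_smul, hb]
    _ = b • a • x := (smul_comm ..).symm

theorem sup {I I' : Submodule A U} (hI : HasScalarExtension B I) (hI' : HasScalarExtension B I')
    (hann : annihilatorIdeal B (I ∩ I' : Set U) ≤
      annihilatorIdeal B (I : Set U) ⊔ annihilatorIdeal B (I' : Set U)) :
    HasScalarExtension B (I ⊔ I') := by
  intro f
  obtain ⟨b, hb⟩ := hI (f ∘ₗ Submodule.inclusion le_sup_left)
  obtain ⟨b', hb'⟩ := hI' (f ∘ₗ Submodule.inclusion le_sup_right)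
  have hbb' : b - b' ∈ annihilatorIdeal B (I ∩ I' : Set U) :=
    mem_annihilatorIdeal.2 fun y hy => by
      rw [sub_smul, sub_eq_zero]
      exact (hb ⟨y, hy.1⟩).symm.trans (hb' ⟨y, hy.2⟩)
  obtain ⟨c, hc, c', hc', hcc'⟩ := Submodule.mem_sup.1 (hann hbb')
  have hbc : b - c = b' + c' := by rw [sub_eq_iff_eq_add', ← add_assoc, add_right_comm, hcc']; abel
  refine ⟨b - c, fun ⟨y, hy⟩ => ?_⟩
  obtain ⟨u, hu, v, hv, rfl⟩ := Submodule.mem_sup.1 hy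
  have hfu : f ⟨u, le_sup_left (a := I) hu⟩ = (b - c) • u := by
    rw [sub_smul, mem_annihilatorIdeal.1 hc u hu, sub_zero]
    exact hb ⟨u, hu⟩
  have hfv : f ⟨v, le_sup_right (b := I') hv⟩ = (b - c) • v := by
    rw [hbc, add_smul, mem_annihilatorIdeal.1 hc' v hv, add_zero]
    exact hb' ⟨v, hv⟩
  rw [smul_add, ← hfu, ← hfv, ← map_add]
  rfl

theorem of_fg [SMulCommClass B A U] (hB : IsPseudoCoherent B U)
    (hAB : HasFGDoubleAnnihilators A B U) (hBA : HasFGDoubleAnnihilators B A U) {e : U}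
    (he : Injective fun b : B => b • e) {I : Submodule A U} (hI : I.FG) :
    HasScalarExtension B I := by
  induction I, hI using Submodule.fg_induction with
  | singleton x => exact span_singleton hBA x
  | sup I I' hI hI' ih ih' =>
    exact ih.sup ih' (annihilatorIdeal_inter hB hAB hBA he hI hI').le

theorem hasHomExtension [SMulCommClass B A U] {I : Submodule A U} (h : HasScalarExtension B I) :
    HasHomExtension I U := fun f =>
  let ⟨b, hb⟩ := h f
  ⟨DistribSMul.toLinearMap A U b, LinearMap.ext fun x => (hb x).symm⟩

end HasScalarExtension

theorem HasFGDoubleAnnihilators.of_isTorsionless_quotient [SMulCommClass B A U]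
    (hB : Surjective (Module.toModuleEnd A U : B → Module.End A U))
    (h : ∀ I : Submodule A U, I.FG → IsTorsionless A (U ⧸ I) U) :
    HasFGDoubleAnnihilators A B U := by
  intro I hI x hx
  rw [← Submodule.Quotient.mk_eq_zero]
  refine h I hI _ fun g => ?_
  obtain ⟨b, hb⟩ := hB (g ∘ₗ I.mkQ)
  have hb' (y : U) : b • y = g (I.mkQ y) := LinearMap.congr_fun hb y
  rw [← I.mkQ_apply, ← hb']
  refine hx b (mem_annihilatorIdeal.2 fun y hy => ?_)
  rw [hb', I.mkQ_apply, (Submodule.Quotient.mk_eq_zero I).2 hy, map_zero]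

theorem FPInjective.of_hasFGDoubleAnnihilators {A U : Type u} {B : Type*} [Ring A] [Ring B]
    [AddCommGroup U] [Module A U] [Module B U] [SMulCommClass B A U] (hA : IsPseudoCoherent A U)
    (hB : IsPseudoCoherent B U) (hAB : HasFGDoubleAnnihilators A B U)
    (hBA : HasFGDoubleAnnihilators B A U) {e : U} (heA : Injective fun a : A => a • e)
    (heB : Injective fun b : B => b • e) : FPInjective A U := by
  have hext : HasFGHomExtensions A U U := fun _ hI =>
    (HasScalarExtension.of_fg hB hAB hBA heB hI).hasHomExtension
  have hinj : Injective (LinearMap.toSpanSingleton A U e) := heA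
  exact .of_hasFGHomExtensions (hA.of_injective hinj) (hext.of_injective hinj)

end DoubleAnnihilator

section RegularBimodule

/-- `U` is free of rank one on `e`, both as an `A`-module and as a `B`-module; the model is
`U = R` with its left and right multiplications. -/
structure IsRegularBimodule (A B : Type*) {U : Type*} [Ring A] [Ring B] [AddCommGroup U]
    [Module A U] [Module B U] (e : U) : Prop where
  bijective_left : Bijective fun a : A => a • e
  bijective_right : Bijective fun b : B => b • e

theorem isRegularBimodule_one (R : Type*) [Ring R] : IsRegularBimodule R Rᵐᵒᵖ (1 : R) :=
  ⟨by simp only [smul_eq_mul, mul_one]; exact bijective_id,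
    by simpa only [op_smul_eq_mul, smul_eq_mul_unop, one_mul] using unop_bijective⟩

namespace IsRegularBimodule

section

variable {A B U : Type*} [Ring A] [Ring B] [AddCommGroup U] [Module A U] [Module B U] {e : U}

theorem symm (h : IsRegularBimodule A B e) : IsRegularBimodule B A e :=
  ⟨h.bijective_right, h.bijective_left⟩

theorem finitePresentation (h : IsRegularBimodule A B e) : Module.FinitePresentation A U :=
  .of_equiv (LinearEquiv.ofBijective (LinearMap.toSpanSingleton A U e) h.bijective_left)

theorem faithfulSMul (h : IsRegularBimodule A B e) : FaithfulSMul A U :=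
  ⟨fun ha => h.bijective_left.injective (ha e)⟩

theorem span_singleton (h : IsRegularBimodule A B e) : Submodule.span A {e} = ⊤ :=
  eq_top_iff.2 fun x _ => Submodule.mem_span_singleton.2 (h.bijective_left.surjective x)

theorem surjective_toModuleEnd [SMulCommClass A B U] (h : IsRegularBimodule A B e) :
    Surjective (Module.toModuleEnd B U : A → Module.End B U) := fun g => by
  obtain ⟨a, ha⟩ := h.bijective_left.surjective (g e)
  exact ⟨a, LinearMap.ext_on h.symm.span_singleton (by simpa using ha)⟩

end

variable {A B U : Type u} [Ring A] [Ring B] [AddCommGroup U] [Module A U] [Module B U] {e : U}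

theorem hasFGDoubleAnnihilators [SMulCommClass B A U] (h : IsRegularBimodule A B e)
    (hM : ∀ (M : Type u) [AddCommGroup M] [Module A M], Module.FinitePresentation A M →
      CyclicModule A M → IsTorsionless A M U) : HasFGDoubleAnnihilators A B U := by
  have := h.finitePresentation
  refine .of_isTorsionless_quotient h.symm.surjective_toModuleEnd fun I hI =>
    hM _ (finitePresentation_quotient hI) ⟨I.mkQ e, ?_⟩
  rw [← Set.image_singleton, ← Submodule.map_span, h.span_singleton, Submodule.map_top,
    I.range_mkQ]

theorem fpInjective [SMulCommClass B A U] (h : IsRegularBimodule A B e)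
    (hA : IsPseudoCoherent A U) (hB : IsPseudoCoherent B U) (hAB : HasFGDoubleAnnihilators A B U)
    (hBA : HasFGDoubleAnnihilators B A U) : FPInjective A U :=
  .of_hasFGDoubleAnnihilators hA hB hAB hBA h.bijective_left.injective
    h.bijective_right.injective

variable [SMulCommClass A B U]

theorem isTorsionless (h : IsRegularBimodule A B e) (hU : FPInjective B U) {M : Type*}
    [AddCommGroup M] [Module A M] [Module.FinitePresentation A M] : IsTorsionless A M U :=
  have := h.faithfulSMul
  have := h.symm.finitePresentation
  hU.isTorsionless h.surjective_toModuleEnd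

theorem bijective_applyₗ' (h : IsRegularBimodule A B e) (hU : FPInjective B U)
    (hB : IsPseudoCoherent B U) {M : Type*} [AddCommGroup M] [Module A M]
    [Module.FinitePresentation A M] :
    Bijective (LinearMap.applyₗ' B : M →+ (M →ₗ[A] U) →ₗ[B] U) :=
  have := h.symm.finitePresentation
  ⟨(h.isTorsionless hU).injective_applyₗ', hU.surjective_applyₗ' hB h.surjective_toModuleEnd⟩

theorem exists_injective_finsupp (h : IsRegularBimodule A B e) (hU : FPInjective B U)
    (hB : IsPseudoCoherent B U) {M : Type u} [AddCommGroup M] [Module A M]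
    [Module.FinitePresentation A M] : ∃ (ι : Type u) (f : M →ₗ[A] ι →₀ U), Injective f :=
  have := h.symm.finitePresentation
  have := finite_dual (A := A) (M := M) hB
  (h.isTorsionless hU).exists_injective_finsupp (B := B)

end IsRegularBimodule

section

variable {R : Type u} [Ring R]

theorem subset_lAnn_rAnn (X : Set R) : X ⊆ lAnn R (rAnn R X) := fun x hx _ ht => ht x hx

theorem subset_rAnn_lAnn (X : Set R) : X ⊆ rAnn R (lAnn R X) := fun x hx _ ht => ht x hx

theorem hasFGDoubleAnnihilators_op_iff :
    HasFGDoubleAnnihilators R Rᵐᵒᵖ R ↔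
      ∀ I : Submodule R R, I.FG → lAnn R (rAnn R (I : Set R)) = (I : Set R) := by
  refine forall₂_congr fun I _ => ?_
  rw [← (subset_lAnn_rAnn _).ge_iff_eq']
  simp only [mem_annihilatorIdeal, MulOpposite.forall]
  rfl

theorem op_hasFGDoubleAnnihilators_iff :
    HasFGDoubleAnnihilators Rᵐᵒᵖ R R ↔
      ∀ J : Submodule Rᵐᵒᵖ R, J.FG → rAnn R (lAnn R (J : Set R)) = (J : Set R) := by
  refine forall₂_congr fun J _ => ?_
  rw [← (subset_rAnn_lAnn _).ge_iff_eq']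
  simp only [mem_annihilatorIdeal]
  rfl

end

end RegularBimodule

/-- Theorem 2.9: characterizations of weakly quasi-Frobenius rings among two-sided coherent
rings. -/
theorem stmt_10 (R : Type u) [Ring R] (hl : LeftCoherent R) (hr : RightCoherent R) :
    List.TFAE
      [WQF R,
       FPInjective R R ∧ FPInjective Rᵐᵒᵖ R,
       IsFPCogenerator R R ∧ IsFPCogenerator Rᵐᵒᵖ R,
       FPInjective Rᵐᵒᵖ R ∧ IsFPCogenerator Rᵐᵒᵖ R,
       (∀ (M : Type u) [AddCommGroup M] [Module R M], Module.FinitePresentation R M →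
          Bijective (dualEval R M)) ∧
         (∀ (M : Type u) [AddCommGroup M] [Module Rᵐᵒᵖ M], Module.FinitePresentation Rᵐᵒᵖ M →
          Bijective (dualEvalRight R M)),
       (∀ (M : Type u) [AddCommGroup M] [Module R M], Module.FinitePresentation R M →
          CyclicModule R M → Bijective (dualEval R M)) ∧
         (∀ (M : Type u) [AddCommGroup M] [Module Rᵐᵒᵖ M], Module.FinitePresentation Rᵐᵒᵖ M →
          CyclicModule Rᵐᵒᵖ M → Bijective (dualEvalRight R M)),
       (∀ (M : Type u) [AddCommGroup M] [Module R M], Module.FinitePresentation R M →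
          CyclicModule R M → EmbedsInFree R M) ∧
         (∀ (M : Type u) [AddCommGroup M] [Module Rᵐᵒᵖ M], Module.FinitePresentation Rᵐᵒᵖ M →
          CyclicModule Rᵐᵒᵖ M → EmbedsInFreeRight R M),
       (∀ I : Submodule R R, I.FG → lAnn R (rAnn R (I : Set R)) = (I : Set R)) ∧
         (∀ J : Submodule Rᵐᵒᵖ R, J.FG → rAnn R (lAnn R (J : Set R)) = (J : Set R))] := by
  have hR := isRegularBimodule_one R
  have hR' := hR.symm
  rw [← hasFGDoubleAnnihilators_op_iff, ← op_hasFGDoubleAnnihilators_iff]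
  tfae_have 1 ↔ 2 := ⟨fun h => h.2.2, fun h => ⟨hl, hr, h⟩⟩
  tfae_have 2 → 4 := fun h => ⟨h.2, isFPCogenerator_iff.2 fun _ _ _ _ => hR'.isTorsionless h.1⟩
  tfae_have 4 → 3 := fun h => ⟨isFPCogenerator_iff.2 fun _ _ _ _ => hR.isTorsionless h.1, h.2⟩
  tfae_have 3 → 8 := fun h =>
    ⟨hR.hasFGDoubleAnnihilators fun M _ _ hM _ => isFPCogenerator_iff.1 h.1 M hM,
      hR'.hasFGDoubleAnnihilators fun M _ _ hM _ => isFPCogenerator_iff.1 h.2 M hM⟩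
  tfae_have 8 → 2 := fun h => ⟨hR.fpInjective hl hr h.1 h.2, hR'.fpInjective hr hl h.2 h.1⟩
  tfae_have 2 → 5 := fun h =>
    ⟨fun _ _ _ _ => hR.bijective_applyₗ' h.2 hr, fun _ _ _ _ => hR'.bijective_applyₗ' h.1 hl⟩
  tfae_have 5 → 6 := fun h => ⟨fun M _ _ hM _ => h.1 M hM, fun M _ _ hM _ => h.2 M hM⟩
  tfae_have 6 → 8 := fun h =>
    ⟨hR.hasFGDoubleAnnihilators fun M _ _ hM hc => .of_injective_applyₗ' (h.1 M hM hc).1,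
      hR'.hasFGDoubleAnnihilators fun M _ _ hM hc => .of_injective_applyₗ' (h.2 M hM hc).1⟩
  tfae_have 2 → 7 := fun h => ⟨fun _ _ _ _ _ => hR.exists_injective_finsupp h.2 hr,
    fun _ _ _ _ _ => hR'.exists_injective_finsupp h.1 hl⟩
  tfae_have 7 → 8 := fun h =>
    ⟨hR.hasFGDoubleAnnihilators fun M _ _ hM hc =>
        have ⟨_, _, hf⟩ := h.1 M hM hc; .of_injective_finsupp hf,
      hR'.hasFGDoubleAnnihilators fun M _ _ hM hc =>
        have ⟨_, _, hf⟩ := h.2 M hM hc; .of_injective_finsupp hf⟩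
  tfae_finish
end

section
/- Let R be a left noetherian ring and a left CF-ring. Then the following are equivalent: (1) R is left artinian; (2) R is left or right semiartinian; (3) R is semiregular; (4) R is semiperfect; (5) the socle soc(_RR) is an essential submodule of the left module _RR. -/
/-!
Common definitions: rings are associative with identity, not necessarily commutative.
Left `R`-modules are `Module R M`; right `R`-modules are `Module Rᵐᵒᵖ M`.
-/

universe u

open MulOpposite Function Pointwise

/-!
Over a left CF-ring every cyclic left module lies in some `ι →₀ R`, and a nonzero submodule of
`ι →₀ R` contains a copy of a left ideal: take a nonzero element of minimal support and project to
one coordinate. So an essential socle makes `R` left semiartinian, and a left noetherian left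
semiartinian ring is left artinian.

Every left ideal of a left CF-ring is a left annihilator, so the ascending chain of the right
annihilators of the powers of `J = rad R` controls the descending chain of those powers: `J` is
nilpotent by Nakayama's lemma, and by Hopkins–Levitzki it remains to show that `R ⧸ J` is
semisimple. A left noetherian ring is semisimple as soon as each of its nonzero left ideals contains
a nonzero idempotent. In the form "every `x ≠ 0` has some `y ≠ 0` with `y * x * y = y`" this
condition is left-right symmetric, which is what transfers it to `R ⧸ J` from the right
semiartinian hypothesis.
-/

theorem complementedLattice_of_forall_exists_isComplemented_le {α : Type*} [Lattice α]
    [BoundedOrder α] [IsModularLattice α] [WellFoundedGT α]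
    (h : ∀ a : α, a ≠ ⊥ → ∃ b ≤ a, b ≠ ⊥ ∧ IsComplemented b) :
    ComplementedLattice α := by
  refine ⟨fun a ↦ ?_⟩
  obtain ⟨c, ⟨hca, d, hcd⟩, hmax⟩ := exists_maximal_of_wellFoundedGT
    (fun c : α ↦ c ≤ a ∧ IsComplemented c) ⟨⊥, bot_le, isComplemented_bot⟩
  refine ⟨d, disjoint_iff.2 (by_contra fun had ↦ ?_), hcd.codisjoint.mono_left hca⟩
  obtain ⟨b, hb, hb₀, b', hbb'⟩ := h _ had
  obtain ⟨hba, hbd⟩ := le_inf_iff.1 hb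
  have hd : b ⊔ b' ⊓ d = d := by rw [← sup_inf_assoc_of_le b' hbd, hbb'.sup_eq_top, top_inf_eq]
  have hcb : IsCompl (c ⊔ b) (b' ⊓ d) :=
    (hbb'.disjoint.mono_right inf_le_left).isCompl_sup_left_of_isCompl_sup_right (hd.symm ▸ hcd)
  have hbc : b ≤ c := le_sup_right.trans (hmax ⟨sup_le hca hba, _, hcb⟩ le_sup_left)
  exact hb₀ (hcd.disjoint hbc hbd |> le_bot_iff.1)

section AtomicSubmodules

variable {R M N : Type*} [Ring R] [AddCommGroup M] [Module R M] [AddCommGroup N] [Module R N]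

theorem isAtomic_submodule_of_injective [IsAtomic (Submodule R N)] (f : M →ₗ[R] N)
    (hf : Injective f) : IsAtomic (Submodule R M) :=
  ((Submodule.orderIsoMapComap (LinearEquiv.ofInjective f hf)).trans
    (LinearMap.range f).mapIic).isAtomic_iff.2 inferInstance

theorem isAtomic_submodule_of_forall_exists_span_singleton
    (h : ∀ P : Submodule R M, P ≠ ⊥ → ∃ x ∈ P, ∃ N : Submodule R (R ∙ x), IsAtom N) :
    IsAtomic (Submodule R M) := by
  refine ⟨fun P ↦ or_iff_not_imp_left.2 fun hP ↦ ?_⟩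
  obtain ⟨x, hxP, N, hN⟩ := h P hP
  have hxN : IsAtom ((R ∙ x).mapIic N) := ((R ∙ x).mapIic.isAtom_iff N).2 hN
  have hxP : R ∙ x ≤ P := (Submodule.span_singleton_le_iff_mem x P).2 hxP
  exact ⟨_, hxN.of_isAtom_coe_Iic, ((R ∙ x).mapIic N).2.trans hxP⟩

theorem isAtomic_submodule_finsupp (ι : Type*) [IsAtomic (Submodule R M)] :
    IsAtomic (Submodule R (ι →₀ M)) := by
  refine isAtomic_submodule_of_forall_exists_span_singleton fun P hP ↦ ?_
  obtain ⟨x, ⟨hxP, hx⟩, hmin⟩ := exists_minimalFor_of_wellFoundedLT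
    (fun x ↦ x ∈ P ∧ x ≠ 0) (fun x : ι →₀ M ↦ x.support) (Submodule.exists_mem_ne_zero_of_ne_bot hP)
  obtain ⟨i, hi⟩ := Finsupp.support_nonempty_iff.2 hx
  -- Coordinate `i` is injective on `R x`: a nonzero multiple vanishing there has smaller support.
  have hinj : Injective (Finsupp.lapply i ∘ₗ (R ∙ x).subtype : R ∙ x →ₗ[R] M) := by
    refine LinearMap.ker_eq_bot.1 (LinearMap.ker_eq_bot'.2 ?_)
    rintro ⟨y, hy⟩ (hyi : y i = 0)
    obtain ⟨r, rfl⟩ := Submodule.mem_span_singleton.1 hy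
    by_contra hrx
    have hsupp := hmin ⟨P.smul_mem r hxP, fun h ↦ hrx (Subtype.ext h)⟩ Finsupp.support_smul
    exact Finsupp.mem_support_iff.1 (hsupp hi) hyi
  have := Submodule.nontrivial_span_singleton (R := R) hx
  have := isAtomic_submodule_of_injective _ hinj
  exact ⟨x, hxP, IsAtomic.exists_atom _⟩

end AtomicSubmodules

section OuterInverses

variable {R : Type*} [Ring R]

theorem isComplemented_iff_exists_isIdempotentElem_span_singleton {I : Ideal R} :
    IsComplemented I ↔ ∃ e : R, IsIdempotentElem e ∧ I = Ideal.span {e} := by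
  constructor
  · rintro ⟨J, hIJ⟩
    obtain ⟨f, hf, rfl⟩ := I.isIdempotentElemEquiv.symm (I.isComplEquivProj ⟨J, hIJ⟩)
    refine ⟨f 1, LinearMap.isIdempotentElem_map_one_iff.2 hf, ?_⟩
    rw [LinearMap.range_eq_map, ← Ideal.span_one, ← Ideal.submodule_span_eq, LinearMap.map_span,
      Set.image_one, Ideal.submodule_span_eq]
  · rintro ⟨e, he, rfl⟩
    have he' : IsIdempotentElem (LinearMap.toSpanSingleton R R e) :=
      LinearMap.isIdempotentElem_map_one_iff.1 (by simpa using he)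
    rw [← Ideal.submodule_span_eq, ← LinearMap.range_toSpanSingleton]
    exact ⟨_, (LinearMap.IsIdempotentElem.isCompl he')⟩

variable (R) in
/-- Every nonzero element of `R` has a nonzero outer inverse. This is a left-right symmetric form of
the condition that every nonzero left ideal contains a nonzero idempotent. -/
def HasNonzeroOuterInverses : Prop :=
  ∀ x : R, x ≠ 0 → ∃ y : R, y ≠ 0 ∧ y * x * y = y

namespace HasNonzeroOuterInverses

theorem of_mulOpposite (h : HasNonzeroOuterInverses Rᵐᵒᵖ) : HasNonzeroOuterInverses R := by
  intro x hx
  obtain ⟨y, hy, hyxy⟩ := h (op x) (by simpa using hx)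
  exact ⟨unop y, by simpa using hy, by simpa [mul_assoc] using congrArg unop hyxy⟩

theorem of_regular (h : ∀ a : R, ∃ x, a * x * a = a) : HasNonzeroOuterInverses R := by
  intro a ha
  obtain ⟨x, hx⟩ := h a
  refine ⟨x * a * x, fun hxax ↦ ha ?_, ?_⟩
  · calc
      a = a * x * (a * x * a) := by rw [hx, hx]
      _ = a * (x * a * x) * a := by noncomm_ring
      _ = 0 := by rw [hxax, mul_zero, zero_mul]
  · calc
      x * a * x * a * (x * a * x) = x * (a * x * (a * x * a)) * x := by noncomm_ring
      _ = x * a * x := by rw [hx, hx]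

theorem iff_forall_exists_isComplemented_le : HasNonzeroOuterInverses R ↔
    ∀ I : Ideal R, I ≠ ⊥ → ∃ K ≤ I, K ≠ ⊥ ∧ IsComplemented K := by
  simp only [isComplemented_iff_exists_isIdempotentElem_span_singleton]
  constructor
  · intro h I hI
    obtain ⟨x, hxI, hx⟩ := Submodule.exists_mem_ne_zero_of_ne_bot hI
    obtain ⟨y, hy, hyxy⟩ := h x hx
    refine ⟨Ideal.span {y * x}, ?_, fun hyx ↦ hy ?_, y * x, ?_, rfl⟩
    · simpa [Ideal.span_singleton_le_iff_mem] using I.mul_mem_left y hxI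
    · rw [← hyxy, Ideal.span_singleton_eq_bot.1 hyx, zero_mul]
    · rw [IsIdempotentElem, ← mul_assoc, hyxy]
  · intro h x hx
    obtain ⟨_, heI, he₀, e, he, rfl⟩ := h (Ideal.span {x}) (by simpa using hx)
    obtain ⟨c, hc⟩ := Ideal.mem_span_singleton'.1 ((Ideal.span_singleton_le_iff_mem _).1 heI)
    have hecx : e * c * x = e := by rw [mul_assoc, hc, he.eq]
    refine ⟨e * c, fun hec ↦ he₀ ?_, by rw [hecx, ← mul_assoc, he.eq]⟩
    rw [← hecx, hec, zero_mul, Ideal.span_singleton_eq_bot]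

theorem of_jacobson_eq_bot [IsAtomic (Ideal R)] (hJ : Ring.jacobson R = ⊥) :
    HasNonzeroOuterInverses R := by
  refine iff_forall_exists_isComplemented_le.2 fun I hI ↦ ?_
  obtain ⟨K, hK, hKI⟩ := (eq_bot_or_exists_atom_le I).resolve_left hI
  obtain ⟨m, hm, hKm⟩ : ∃ m : Ideal R, IsCoatom m ∧ ¬ K ≤ m := by
    by_contra! h
    exact hK.1 (le_bot_iff.1 ((le_sInf h).trans_eq hJ))
  exact ⟨K, hKI, hK.1, m, hK.not_le_iff_disjoint.1 hKm, (hm.not_le_iff_codisjoint.1 hKm).symm⟩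

theorem isSemisimpleRing [IsNoetherianRing R] (h : HasNonzeroOuterInverses R) :
    IsSemisimpleRing R :=
  isSemisimpleModule_iff _ _ |>.2 <| complementedLattice_of_forall_exists_isComplemented_le <|
    iff_forall_exists_isComplemented_le.1 h

end HasNonzeroOuterInverses

theorem exists_mul_mul_eq_self_of_isSemisimpleRing [IsSemisimpleRing R] (a : R) :
    ∃ x, a * x * a = a := by
  obtain ⟨e, he, hae⟩ := IsSemisimpleRing.ideal_eq_span_idempotent (Ideal.span {a})
  obtain ⟨x, hx⟩ := Ideal.mem_span_singleton'.1 (hae ▸ Ideal.mem_span_singleton_self e)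
  obtain ⟨b, hb⟩ := Ideal.mem_span_singleton'.1 (hae ▸ Ideal.mem_span_singleton_self a)
  exact ⟨x, by rw [mul_assoc, hx, ← hb, mul_assoc, he.eq]⟩

end OuterInverses

section Jacobson

variable {R : Type*} [Ring R]

theorem isUnit_one_sub_mul_comm {a b : R} : IsUnit (1 - a * b) ↔ IsUnit (1 - b * a) := by
  simpa [spectrum.mem_iff, not_iff_not] using
    spectrum.unit_mem_mul_comm (R := ℤ) (a := a) (b := b) (r := 1)

theorem mem_jacobson_iff_forall_isUnit {x : R} :
    x ∈ Ring.jacobson R ↔ ∀ y, IsUnit (1 - y * x) := by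
  constructor
  · intro hx y
    have exists_left_inv (z : R) (hz : z - 1 ∈ Ring.jacobson R) : ∃ s, s * z = 1 := by
      rw [← Ideal.jacobson_bot] at hz
      simpa [sub_eq_zero] using Ideal.exists_mul_sub_mem_of_sub_one_mem_jacobson z hz
    have hyx : y * x ∈ Ring.jacobson R := Ideal.mul_mem_left _ y hx
    obtain ⟨s, hs⟩ := exists_left_inv (1 - y * x) (by simpa using hyx)
    obtain ⟨t, ht⟩ := exists_left_inv s <| by
      rw [show s - 1 = s * (y * x) by rw [← hs]; noncomm_ring]
      exact Ideal.mul_mem_left _ s hyx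
    rw [left_inv_eq_right_inv ht hs] at ht
    exact isUnit_iff_exists.2 ⟨s, ht, hs⟩
  · intro h
    rw [← Ideal.jacobson_bot, Ideal.mem_jacobson_iff]
    intro y
    obtain ⟨z, hz⟩ := (h (-y)).exists_left_inv
    exact ⟨z, by rw [Submodule.mem_bot, ← hz]; noncomm_ring⟩

theorem op_mem_jacobson_iff {x : R} : op x ∈ Ring.jacobson Rᵐᵒᵖ ↔ x ∈ Ring.jacobson R := by
  simp only [mem_jacobson_iff_forall_isUnit, MulOpposite.forall, ← op_mul, ← op_one, ← op_sub,
    isUnit_op, isUnit_one_sub_mul_comm (a := x)]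

theorem jacobson_mulOpposite_eq_bot (h : Ring.jacobson R = ⊥) :
    Ring.jacobson Rᵐᵒᵖ = ⊥ := by
  refine (Submodule.eq_bot_iff _).2 fun x hx ↦ ?_
  rw [← op_unop x, op_mem_jacobson_iff, h, Submodule.mem_bot] at hx
  exact unop_injective hx

end Jacobson

section Semiartinian

theorem isArtinian_of_forall_isAtomic_quotient {R M : Type*} [Ring R] [AddCommGroup M] [Module R M]
    [IsNoetherian R M] (h : ∀ N : Submodule R M, IsAtomic (Submodule R (M ⧸ N))) :
    IsArtinian R M := by
  suffices IsArtinian R (M ⧸ (⊥ : Submodule R M)) from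
    isArtinian_of_linearEquiv (Submodule.quotEquivOfEqBot ⊥ rfl)
  refine IsNoetherian.induction (P := fun N : Submodule R M ↦ IsArtinian R (M ⧸ N))
    (fun N ih ↦ ?_) ⊥
  obtain hbot | ⟨S, hS, -⟩ := eq_bot_or_exists_atom_le (⊤ : Submodule R (M ⧸ N))
  · have := subsingleton_of_bot_eq_top hbot.symm
    have := (Submodule.subsingleton_iff R).1 this
    infer_instance
  have : IsSimpleModule R S := isSimpleModule_iff_isAtom.2 hS
  have hlt : N < S.comap N.mkQ := by
    refine lt_of_le_of_ne (N.le_comap_mkQ S) fun h ↦ hS.1 ?_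
    rw [← Submodule.map_comap_eq_of_surjective N.mkQ_surjective S, ← h, N.mkQ_map_self]
  have := ih _ hlt
  refine (isArtinian_iff_submodule_quotient S).2 ⟨inferInstance, ?_⟩
  exact isArtinian_of_surjective _ (Submodule.mapQ _ S N.mkQ le_rfl) <|
    .of_comp (g := Submodule.mkQ _) <| S.mkQ_surjective.comp N.mkQ_surjective

variable {R : Type u} [Ring R] {M : Type u} [AddCommGroup M] [Module R M]

theorem cyclicModule_span_singleton (x : M) : CyclicModule R (R ∙ x) :=
  ⟨⟨x, Submodule.mem_span_singleton_self x⟩, by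
    apply Submodule.map_injective_of_injective (R ∙ x).subtype_injective
    simp [Submodule.map_span]⟩

theorem socle_ne_bot_iff : socle R M ≠ ⊥ ↔ ∃ N : Submodule R M, IsAtom N := by
  simp only [socle, ne_eq, sSup_eq_bot, isSimpleModule_iff_isAtom, Set.mem_ofPred_eq, not_forall]
  exact exists_congr fun N ↦ ⟨fun h ↦ h.1, fun h ↦ ⟨h, h.1⟩⟩

theorem essentialSub_socle_iff_isAtomic :
    EssentialSub R (socle R M) ↔ IsAtomic (Submodule R M) := by
  refine ⟨fun h ↦ ⟨fun P ↦ or_iff_not_imp_left.2 fun hP ↦ ?_⟩, fun _ P hP ↦ ?_⟩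
  · have : IsSemisimpleModule R (socle R M) := by
      rw [socle, sSup_eq_iSup]
      exact isSemisimpleModule_biSup_of_isSemisimpleModule_submodule
        fun N (_ : IsSimpleModule R N) ↦ inferInstance
    have : IsSemisimpleModule R ↥(socle R M ⊓ P) :=
      .of_injective _ (Submodule.inclusion_injective (inf_le_left (a := socle R M) (b := P)))
    obtain ⟨N, hN, hNs⟩ :=
      (IsSemisimpleModule.eq_bot_or_exists_simple_le (socle R M ⊓ P)).resolve_left (h P hP)
    exact ⟨N, isSimpleModule_iff_isAtom.1 hNs, hN.trans inf_le_right⟩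
  · obtain ⟨N, hN, hNP⟩ := (eq_bot_or_exists_atom_le P).resolve_left hP
    have hNsocle : N ≤ socle R M := le_sSup (isSimpleModule_iff_isAtom.2 hN)
    exact ne_bot_of_le_ne_bot hN.1 (le_inf hNsocle hNP)

namespace LeftSemiartinian

theorem isAtomic_submodule (h : LeftSemiartinian R) : IsAtomic (Submodule R M) := by
  refine isAtomic_submodule_of_forall_exists_span_singleton fun P hP ↦ ?_
  obtain ⟨x, hxP, hx⟩ := Submodule.exists_mem_ne_zero_of_ne_bot hP
  have := Submodule.nontrivial_span_singleton (R := R) hx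
  exact ⟨x, hxP, socle_ne_bot_iff.1 (h _ (cyclicModule_span_singleton x) this)⟩

theorem of_isAtomic (h : ∀ (M : Type u) [AddCommGroup M] [Module R M], CyclicModule R M →
    IsAtomic (Submodule R M)) : LeftSemiartinian R := by
  intro M _ _ hM _
  have := h M hM
  exact socle_ne_bot_iff.2 (IsAtomic.exists_atom _)

theorem of_isArtinianRing [IsArtinianRing R] : LeftSemiartinian R :=
  of_isAtomic fun M _ _ ⟨m, hm⟩ ↦
    have : Module.Finite R M := ⟨⟨{m}, by simpa using hm⟩⟩
    have : IsArtinian R M := inferInstance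
    inferInstance

theorem isArtinianRing [IsNoetherianRing R] (h : LeftSemiartinian R) : IsArtinianRing R :=
  isArtinian_of_forall_isAtomic_quotient fun _ ↦ h.isAtomic_submodule

theorem of_surjective {S : Type u} [Ring S] (φ : R →+* S) (hφ : Surjective φ)
    (h : LeftSemiartinian R) : LeftSemiartinian S :=
  of_isAtomic fun M _ _ _ ↦
    letI : Module R M := Module.compHom M φ
    have : RingHomSurjective φ := ⟨hφ⟩
    let idSemilinear : M →ₛₗ[φ] M := ⟨.id M, fun _ _ ↦ rfl⟩
    (Submodule.orderIsoMapComapOfBijective idSemilinear bijective_id).isAtomic_iff.1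
      h.isAtomic_submodule

end LeftSemiartinian

theorem LeftCF.leftSemiartinian [IsAtomic (Submodule R R)] (h : LeftCF R) : LeftSemiartinian R :=
  .of_isAtomic fun M _ _ hM ↦
    have ⟨ι, f, hf⟩ := h M hM
    have := isAtomic_submodule_finsupp (R := R) (M := R) ι
    isAtomic_submodule_of_injective f hf

end Semiartinian

section Annihilators

variable {R : Type u} [Ring R]

theorem cyclicModule_quotient (I : Ideal R) : CyclicModule R (R ⧸ I) :=
  ⟨I.mkQ 1, Submodule.eq_top_iff'.2 fun x ↦
    have ⟨r, hr⟩ := I.mkQ_surjective x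
    Submodule.mem_span_singleton.2 ⟨r, by rw [← map_smul, smul_eq_mul, mul_one, hr]⟩⟩

theorem LeftCF.lAnn_rAnn (h : LeftCF R) (I : Ideal R) : lAnn R (rAnn R I) = I := by
  refine Set.Subset.antisymm (fun y hy ↦ ?_) fun a ha x hx ↦ hx a ha
  obtain ⟨ι, f, hf⟩ := h (R ⧸ I) (cyclicModule_quotient I)
  have mem_iff (r : R) : r ∈ I ↔ f (I.mkQ r) = 0 := by
    rw [map_eq_zero_iff f hf, Submodule.mkQ_apply, Submodule.Quotient.mk_eq_zero]
  have apply_eq (r : R) (i : ι) : f (I.mkQ r) i = r * f (I.mkQ 1) i := by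
    rw [← smul_eq_mul, ← Finsupp.smul_apply, ← map_smul, ← map_smul, smul_eq_mul, mul_one]
  refine (mem_iff y).2 (Finsupp.ext fun i ↦ ?_)
  rw [apply_eq]
  exact hy _ fun a ha ↦ by rw [← apply_eq, (mem_iff a).1 ha, Finsupp.zero_apply]

/-- The right annihilator of a two-sided ideal, as a left ideal. -/
def rAnnIdeal (I : Ideal R) [I.IsTwoSided] : Ideal R where
  carrier := rAnn R I
  zero_mem' := fun x _ ↦ mul_zero x
  add_mem' := fun ha hb x hx ↦ by rw [mul_add, ha x hx, hb x hx, add_zero]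
  smul_mem' := fun r a ha x hx ↦ by rw [smul_eq_mul, ← mul_assoc, ha _ (I.mul_mem_right r hx)]

theorem exists_pow_succ_eq_pow_of_lAnn_rAnn [IsNoetherianRing R]
    (h : ∀ I : Ideal R, lAnn R (rAnn R I) = I) (I : Ideal R) [I.IsTwoSided] :
    ∃ n, I ^ (n + 1) = I ^ n := by
  have hmono : Monotone fun n ↦ rAnnIdeal (I ^ n) :=
    fun m n hmn a ha x hx ↦ ha x (Ideal.pow_le_pow_right hmn hx)
  obtain ⟨n, hn⟩ := monotone_stabilizes_iff_noetherian.2 ‹IsNoetherian R R› ⟨_, hmono⟩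
  have hrAnn : rAnn R (I ^ n : Ideal R) = rAnn R (I ^ (n + 1) : Ideal R) :=
    congrArg SetLike.coe (hn (n + 1) n.le_succ)
  exact ⟨n, SetLike.coe_injective (by rw [← h, ← hrAnn, h])⟩

theorem isNilpotent_jacobson_of_lAnn_rAnn [IsNoetherianRing R]
    (h : ∀ I : Ideal R, lAnn R (rAnn R I) = I) : IsNilpotent (Ring.jacobson R) := by
  obtain ⟨n, hn⟩ := exists_pow_succ_eq_pow_of_lAnn_rAnn h (Ring.jacobson R)
  refine ⟨n, (IsNoetherian.noetherian (Ring.jacobson R ^ n)).eq_bot_of_le_jacobson_smul ?_⟩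
  rw [smul_eq_mul, ← Ideal.IsTwoSided.pow_succ, hn]

theorem LeftCF.isArtinianRing [IsNoetherianRing R] (h : LeftCF R)
    (hss : IsSemisimpleRing (R ⧸ Ring.jacobson R)) : IsArtinianRing R :=
  have : IsSemiprimaryRing R := ⟨hss, isNilpotent_jacobson_of_lAnn_rAnn h.lAnn_rAnn⟩
  IsSemiprimaryRing.isNoetherian_iff_isArtinian.1 ‹_›

end Annihilators

section JacobsonQuotient

variable {R : Type u} [Ring R]

theorem isSemisimpleRing_quotient_jacobson_iff :
    IsSemisimpleRing (R ⧸ Ring.jacobson R) ↔ IsSemisimpleModule R (R ⧸ Ring.jacobson R) :=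
  let idSemilinear : R ⧸ Ring.jacobson R →ₛₗ[Ideal.Quotient.mk (Ring.jacobson R)]
      R ⧸ Ring.jacobson R := ⟨.id _, fun _ _ ↦ rfl⟩
  (idSemilinear.isSemisimpleModule_iff_of_bijective bijective_id).symm

theorem semiregular_iff :
    Semiregular R ↔ ∀ a : R ⧸ Ring.jacobson R, ∃ x, a * x * a = a := by
  rw [Semiregular, Ideal.jacobson_bot, Ideal.Quotient.mk_surjective.forall]
  refine forall_congr' fun a ↦ Iff.trans (exists_congr fun x ↦ ?_)
    Ideal.Quotient.mk_surjective.exists.symm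
  rw [← map_mul, ← map_mul, eq_comm, Ideal.Quotient.eq]

instance isNoetherianRing_quotient [IsNoetherianRing R] (I : Ideal R) [I.IsTwoSided] :
    IsNoetherianRing (R ⧸ I) :=
  isNoetherianRing_of_surjective _ _ _ Ideal.Quotient.mk_surjective

theorem Semiregular.isSemisimpleRing_quotient_jacobson [IsNoetherianRing R] (h : Semiregular R) :
    IsSemisimpleRing (R ⧸ Ring.jacobson R) :=
  (HasNonzeroOuterInverses.of_regular (semiregular_iff.1 h)).isSemisimpleRing

theorem LeftSemiartinian.isSemisimpleRing_quotient_jacobson_of_mulOpposite [IsNoetherianRing R]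
    (h : LeftSemiartinian Rᵐᵒᵖ) : IsSemisimpleRing (R ⧸ Ring.jacobson R) := by
  let φ : Rᵐᵒᵖ →+* (R ⧸ Ring.jacobson R)ᵐᵒᵖ := (Ideal.Quotient.mk (Ring.jacobson R)).op
  have hφ : Surjective φ :=
    op_surjective.comp (Ideal.Quotient.mk_surjective.comp unop_surjective)
  have : IsAtomic (Ideal (R ⧸ Ring.jacobson R)ᵐᵒᵖ) := (h.of_surjective φ hφ).isAtomic_submodule
  have hJ := jacobson_mulOpposite_eq_bot (Ring.jacobson_quotient_jacobson R)
  exact (HasNonzeroOuterInverses.of_jacobson_eq_bot hJ).of_mulOpposite.isSemisimpleRing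

theorem Semiperfect.semiregular (h : Semiperfect R) : Semiregular R := by
  have hss := h.1
  rw [Ideal.jacobson_bot, ← isSemisimpleRing_quotient_jacobson_iff] at hss
  exact semiregular_iff.2 exists_mul_mul_eq_self_of_isSemisimpleRing

theorem semiperfect_of_isSemiprimaryRing [IsSemiprimaryRing R] : Semiperfect R := by
  obtain ⟨hss, n, hn⟩ := ‹IsSemiprimaryRing R›
  rw [Semiperfect, Ideal.jacobson_bot]
  refine ⟨isSemisimpleRing_quotient_jacobson_iff.1 hss, fun a ha ↦ ?_⟩
  have hnil : ∀ x ∈ RingHom.ker (Ideal.Quotient.mk (Ring.jacobson R)), IsNilpotent x := by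
    intro x hx
    rw [Ideal.mk_ker] at hx
    exact ⟨n, by simpa [hn] using Ideal.pow_mem_pow hx n⟩
  have hidem : IsIdempotentElem (Ideal.Quotient.mk (Ring.jacobson R) a) := by
    rwa [IsIdempotentElem, ← map_mul, Ideal.Quotient.eq]
  obtain ⟨e, he, hea⟩ := exists_isIdempotentElem_eq_of_ker_isNilpotent _ hnil _ ⟨a, rfl⟩ hidem
  exact ⟨e, he, Ideal.Quotient.eq.1 hea⟩

end JacobsonQuotient

/-- Proposition 2.13: for a left noetherian left CF-ring the following are equivalent. -/
theorem stmt_14 (R : Type u) [Ring R] (h1 : IsNoetherianRing R) (h2 : LeftCF R) :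
    List.TFAE
      [IsArtinianRing R,
       LeftSemiartinian R ∨ LeftSemiartinian Rᵐᵒᵖ,
       Semiregular R,
       Semiperfect R,
       EssentialSub R (socle R R)] := by
  have := h1
  tfae_have 1 → 2 := fun _ ↦ .inl .of_isArtinianRing
  tfae_have 2 → 1
    | .inl h => h.isArtinianRing
    | .inr h => h2.isArtinianRing h.isSemisimpleRing_quotient_jacobson_of_mulOpposite
  tfae_have 1 → 4 := fun _ ↦ semiperfect_of_isSemiprimaryRing
  tfae_have 4 → 3 := Semiperfect.semiregular
  tfae_have 3 → 1 := fun h ↦ h2.isArtinianRing h.isSemisimpleRing_quotient_jacobson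
  tfae_have 1 → 5 := fun _ ↦ essentialSub_socle_iff_isAtomic.2 inferInstance
  tfae_have 5 → 1 := fun h ↦
    have := essentialSub_socle_iff_isAtomic.1 h
    h2.leftSemiartinian.isArtinianRing
  tfae_finish
end
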